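/- arXiv:math/0701399 — 2 statements merged into one kernel-verified Lean document; each statement's English description precedes it below -/
import Mathlib

section
/- Let F be an associative algebra (not necessarily unital) over a field k of characteristic 0. Then for all k, k' ≥ 0 and ℓ, ℓ' ≥ 1: (a) I_k^ℓ(F)·I_{k'}^{ℓ'}(F) ⊆ I_{k+k'}^{ℓ+ℓ'}(F) and I_k^{≤ℓ}(F)·I_{k'}^{≤ℓ'}(F) ⊆ I_{k+k'}^{≤ℓ+ℓ'}(F); (b) [I_k^ℓ(F), I_{k'}^{ℓ'}(F)] ⊆ [F, I_{k+k'}^{ℓ+ℓ'−1}(F)] and [I_k^{≤ℓ}(F), I_{k'}^{≤ℓ'}(F)] ⊆ [F, I_{k+k'}^{≤ℓ+ℓ'−1}(F)]. -/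
open Submodule TensorProduct

variable (K : Type*) [Field K]

/-- The span of all products `a * b`, `a ∈ S`, `b ∈ T` (the subspace `S·T`). -/
def pSpan {R : Type*} [NonUnitalRing R] [Module K R] (S T : Submodule K R) : Submodule K R :=
  Submodule.span K {x | ∃ a ∈ S, ∃ b ∈ T, x = a * b}

/-- The span of all commutators `a * b - b * a`, `a ∈ S`, `b ∈ T` (the subspace `[S, T]`). -/
def bSpan {R : Type*} [NonUnitalRing R] [Module K R] (S T : Submodule K R) : Submodule K R :=
  Submodule.span K {x | ∃ a ∈ S, ∃ b ∈ T, x = a * b - b * a}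

/-- The `k`-th commutator space `S^(k)`: `S^(0) = S`, `S^(k) = [S, S^(k-1)]`.
For `S = ⊤` this is the commutator space `F^(k)` of the algebra. -/
def cSp {R : Type*} [NonUnitalRing R] [Module K R] (S : Submodule K R) : ℕ → Submodule K R
  | 0 => S
  | (k+1) => bSpan K S (cSp S k)

/-- `IklS K S ℓ k` is `I_k^ℓ(R, S)`: the sum of `S^(λ₁) ⋯ S^(λ_ℓ)` over
`λ₁ + ⋯ + λ_ℓ = k`, defined via the recursion `I_k^1 = S^(k)`,
`I_k^ℓ = Σ_{0 ≤ i ≤ k} S^(i) · I_{k-i}^{ℓ-1}`.  The first argument is the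
superscript `ℓ`, the second the subscript `k`; the (unused) value at `ℓ = 0` is `⊥`.
For `S = ⊤` this is `I_k^ℓ(F)`. -/
def IklS {R : Type*} [NonUnitalRing R] [Module K R] (S : Submodule K R) :
    ℕ → ℕ → Submodule K R
  | 0, _ => ⊥
  | 1, k => cSp K S k
  | (ℓ+2), k => ∑ i ∈ Finset.range (k+1), pSpan K (cSp K S i) (IklS S (ℓ+1) (k-i))

/-- `I_k^{≤ℓ}(F) = Σ_{1 ≤ ℓ' ≤ ℓ} I_k^{ℓ'}(F)`. -/
def Ikle {R : Type*} [NonUnitalRing R] [Module K R] (ℓ k : ℕ) : Submodule K R :=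
  ∑ ℓ' ∈ Finset.Icc 1 ℓ, IklS K (⊤ : Submodule K R) ℓ' k

/-- `I_k(F) = Σ_{ℓ ≥ 1} I_k^ℓ(F)`. -/
def Ik (R : Type*) [NonUnitalRing R] [Module K R] (k : ℕ) : Submodule K R :=
  ⨆ ℓ : ℕ, IklS K (⊤ : Submodule K R) (ℓ + 1) k

/-- `g^n`: the span of all products of `n` elements of `g` (set to `⊥` for `n = 0`). -/
def gPow {R : Type*} [NonUnitalRing R] [Module K R] (g : Submodule K R) : ℕ → Submodule K R
  | 0 => ⊥
  | 1 => g
  | (n+2) => pSpan K g (gPow g (n+1))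

/-- The Lie subalgebra (under the commutator bracket) generated by a subspace `S`:
the smallest subspace containing `S` and closed under `(x, y) ↦ x * y - y * x`. -/
def lieGen {R : Type*} [NonUnitalRing R] [Module K R] (S : Submodule K R) : Submodule K R :=
  sInf {T | S ≤ T ∧ ∀ x ∈ T, ∀ y ∈ T, x * y - y * x ∈ T}

/-- The subspace `S ⊗ T` of `F ⊗[K] A`: the span of all pure tensors `f ⊗ a`
with `f ∈ S`, `a ∈ T`. -/
def tSpan {F A : Type*} [AddCommGroup F] [Module K F] [AddCommGroup A] [Module K A]
    (S : Submodule K F) (T : Submodule K A) : Submodule K (F ⊗[K] A) :=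
  Submodule.span K {z | ∃ f ∈ S, ∃ a ∈ T, z = f ⊗ₜ[K] a}

/-- The current Lie algebra `(g, A)(F)`: the Lie subalgebra of `F ⊗ A` (with the
commutator bracket) generated by `F ⊗ g`. -/
def currentLie {F A : Type*} [NonUnitalRing F] [Module K F] [SMulCommClass K F F]
    [IsScalarTower K F F] [Ring A] [Algebra K A] (g : Submodule K A) :
    Submodule K (F ⊗[K] A) :=
  lieGen K (tSpan K (⊤ : Submodule K F) g)

section helpers
variable {K}
variable {F : Type*} [NonUnitalRing F] [Module K F]

theorem sum_le_iff_aux {ι : Type*} (s : Finset ι) (f : ι → Submodule K F) (U : Submodule K F) :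
    ∑ i ∈ s, f i ≤ U ↔ ∀ i ∈ s, f i ≤ U := by
  classical
  induction s using Finset.induction_on with
  | empty => simp
  | insert a s ha ih => rw [Finset.sum_insert ha]; simp [ih]

theorem pSpan_le' {S T U : Submodule K F} :
    pSpan K S T ≤ U ↔ ∀ a ∈ S, ∀ b ∈ T, a * b ∈ U := by
  unfold pSpan
  rw [Submodule.span_le]
  constructor
  · intro h a ha b hb
    exact h ⟨a, ha, b, hb, rfl⟩
  · rintro h _ ⟨a, ha, b, hb, rfl⟩
    exact h a ha b hb

theorem bSpan_le' {S T U : Submodule K F} :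
    bSpan K S T ≤ U ↔ ∀ a ∈ S, ∀ b ∈ T, a * b - b * a ∈ U := by
  unfold bSpan
  rw [Submodule.span_le]
  constructor
  · intro h a ha b hb
    exact h ⟨a, ha, b, hb, rfl⟩
  · rintro h _ ⟨a, ha, b, hb, rfl⟩
    exact h a ha b hb

theorem mem_bSpan' {S T : Submodule K F} {a b : F} (ha : a ∈ S) (hb : b ∈ T) :
    a * b - b * a ∈ bSpan K S T := bSpan_le'.1 le_rfl a ha b hb

theorem bSpan_mono' {S T T' : Submodule K F} (h : T ≤ T') : bSpan K S T ≤ bSpan K S T' :=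
  bSpan_le'.2 fun _ ha _ hb => mem_bSpan' ha (h hb)

theorem Ikl_mul_mem {l k i j : ℕ} (h : i + j = k) {a b : F}
    (ha : a ∈ cSp K (⊤ : Submodule K F) i) (hb : b ∈ IklS K (⊤ : Submodule K F) (l+1) j) :
    a * b ∈ IklS K (⊤ : Submodule K F) (l+2) k := by
  have h1 := (sum_le_iff_aux (Finset.range (k+1)) (fun i => pSpan K (cSp K (⊤ : Submodule K F) i)
    (IklS K ⊤ (l+1) (k-i))) (IklS K (⊤ : Submodule K F) (l+2) k)).1 (by rw [IklS]) i
    (by simp; omega)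
  refine pSpan_le'.1 h1 a ha b ?_
  have : k - i = j := by omega
  rwa [this]

theorem Ikl_le {l k : ℕ} {U : Submodule K F}
    (h : ∀ i j, i + j = k → ∀ a ∈ cSp K (⊤ : Submodule K F) i,
      ∀ b ∈ IklS K (⊤ : Submodule K F) (l+1) j, a * b ∈ U) :
    IklS K (⊤ : Submodule K F) (l+2) k ≤ U := by
  rw [IklS, sum_le_iff_aux]
  intro i hi
  rw [pSpan_le']
  exact h i (k-i) (by simp at hi; omega)

theorem Ikl_le_Ikle {l m k : ℕ} (h1 : 1 ≤ l) (h2 : l ≤ m) :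
    IklS K (⊤ : Submodule K F) l k ≤ Ikle K (R := F) m k :=
  (sum_le_iff_aux _ (fun l' => IklS K (⊤ : Submodule K F) l' k) _).1 (le_of_eq rfl) l (Finset.mem_Icc.2 ⟨h1, h2⟩)

variable [SMulCommClass K F F] [IsScalarTower K F F]

def pL (T U : Submodule K F) : Submodule K F where
  carrier := {a | ∀ b ∈ T, a * b ∈ U}
  add_mem' := by
    intro x y hx hy b hb
    rw [add_mul]; exact U.add_mem (hx b hb) (hy b hb)
  zero_mem' := by intro b _; simp
  smul_mem' := by
    intro r x hx b hb
    rw [smul_mul_assoc]; exact U.smul_mem r (hx b hb)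

def pR (S U : Submodule K F) : Submodule K F where
  carrier := {b | ∀ a ∈ S, a * b ∈ U}
  add_mem' := by
    intro x y hx hy b hb
    rw [mul_add]; exact U.add_mem (hx b hb) (hy b hb)
  zero_mem' := by intro b _; simp
  smul_mem' := by
    intro r x hx b hb
    rw [mul_smul_comm]; exact U.smul_mem r (hx b hb)

def bL (T U : Submodule K F) : Submodule K F where
  carrier := {a | ∀ b ∈ T, a * b - b * a ∈ U}
  add_mem' := by
    intro x y hx hy b hb
    have := U.add_mem (hx b hb) (hy b hb)
    rw [add_mul, mul_add]; convert this using 1; abel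
  zero_mem' := by intro b _; simp
  smul_mem' := by
    intro r x hx b hb
    rw [smul_mul_assoc, mul_smul_comm, ← smul_sub]; exact U.smul_mem r (hx b hb)

theorem neg_br {U : Submodule K F} {a b : F} (h : a * b - b * a ∈ U) : b * a - a * b ∈ U := by
  have := U.neg_mem h
  rwa [neg_sub] at this

theorem pA (l l' k k' : ℕ) : pSpan K (IklS K (⊤ : Submodule K F) (l+1) k) (IklS K ⊤ (l'+1) k') ≤
      IklS K (⊤ : Submodule K F) (l + l' + 2) (k + k') := by
  rw [pSpan_le']
  induction l generalizing k with
  | zero =>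
    intro a ha b hb
    rw [Nat.zero_add]
    exact Ikl_mul_mem rfl ha hb
  | succ l ih =>
    change _ ≤ pL (IklS K (⊤ : Submodule K F) (l'+1) k') _
    apply Ikl_le
    intro i j hij a ha b hb c hc
    rw [mul_assoc]
    have := ih j b hb c hc
    rw [show l + 1 + l' + 2 = (l + l' + 1) + 2 by omega]
    exact Ikl_mul_mem (j := j + k') (by omega) ha this

theorem pD (l k : ℕ) : bSpan K (⊤ : Submodule K F) (IklS K ⊤ (l+1) k) ≤
      IklS K (⊤ : Submodule K F) (l + 1) (k + 1) := by
  induction l generalizing k with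
  | zero => exact le_rfl
  | succ l ih =>
    suffices h : IklS K ⊤ (l+2) k ≤ bL ⊤ (IklS K (⊤ : Submodule K F) (l + 2) (k + 1)) from
      bSpan_le'.2 fun a ha b hb => neg_br (h hb a ha)
    apply Ikl_le
    intro i j hij a ha b hb f hf
    have h1 : f * a - a * f ∈ cSp K (⊤ : Submodule K F) (i+1) := mem_bSpan' hf ha
    have h2 := bSpan_le'.1 (ih j) f hf b hb
    have h3 := Ikl_mul_mem (k := k+1) (by omega) h1 hb
    have h4 := Ikl_mul_mem (k := k+1) (by omega) ha h2
    apply neg_br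
    convert Submodule.add_mem _ h3 h4 using 1
    noncomm_ring

theorem pE (j l k : ℕ) : ∀ a ∈ cSp K (⊤ : Submodule K F) j, ∀ c ∈ IklS K (⊤ : Submodule K F) (l+1) k,
    a * c - c * a ∈ bSpan K ⊤ (IklS K (⊤ : Submodule K F) (l+1) (k + j)) := by
  induction j generalizing k with
  | zero => intro a ha c hc; exact mem_bSpan' trivial hc
  | succ j ih =>
    change bSpan K _ _ ≤ bL (IklS K (⊤ : Submodule K F) (l+1) k) _
    rw [bSpan_le']
    intro f hf g hg c hc
    have h1 := pD l _ (ih k g hg c hc)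
    have h2 := mem_bSpan' hf h1
    have h3 := ih (k+1) g hg _ (pD l _ (mem_bSpan' hf hc))
    rw [show k + 1 + j = k + j + 1 by omega] at h3
    rw [show k + (j + 1) = k + j + 1 by omega]
    convert Submodule.sub_mem _ h2 h3 using 1
    noncomm_ring

theorem pB (l l' k k' : ℕ) : bSpan K (IklS K (⊤ : Submodule K F) (l+1) k) (IklS K ⊤ (l'+1) k') ≤
      bSpan K ⊤ (IklS K (⊤ : Submodule K F) (l + l' + 1) (k + k')) := by
  rw [bSpan_le']
  induction l generalizing k l' k' with
  | zero =>
    intro a ha b hb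
    rw [Nat.zero_add, add_comm k]
    exact pE k l' k' a ha b hb
  | succ l ih =>
    change _ ≤ bL (IklS K (⊤ : Submodule K F) (l'+1) k') _
    apply Ikl_le
    intro i j hij a ha b hb c hc
    have h1 := pE i _ _ a ha _ (pSpan_le'.1 (pA l l' j k') b hb c hc)
    have h2 := ih (l'+1) j (k'+i) b hb (c * a) (by
      have := pSpan_le'.1 (pA l' 0 k' i) c hc a ha
      exact this)
    rw [show l + (l' + 1) + 1 = l + l' + 1 + 1 by omega,
      show j + (k' + i) = k + k' by omega] at h2
    rw [show j + k' + i = k + k' by omega] at h1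
    rw [show l + 1 + l' + 1 = l + l' + 1 + 1 by omega]
    convert Submodule.add_mem _ h1 h2 using 1
    noncomm_ring

theorem Ikle_p (m m' k k' : ℕ) (U : Submodule K F)
    (h : ∀ l ∈ Finset.Icc 1 m, ∀ l' ∈ Finset.Icc 1 m',
      pSpan K (IklS K (⊤ : Submodule K F) l k) (IklS K ⊤ l' k') ≤ U) :
    pSpan K (Ikle K (R := F) m k) (Ikle K (R := F) m' k') ≤ U := by
  rw [pSpan_le']
  change _ ≤ pL (Ikle K (R := F) m' k') U
  rw [Ikle, sum_le_iff_aux]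
  intro l hl a ha
  suffices h' : Ikle K (R := F) m' k' ≤ pR (IklS K (⊤ : Submodule K F) l k) U from
    fun b hb => h' hb a ha
  rw [Ikle, sum_le_iff_aux]
  intro l' hl' b hb a ha
  exact pSpan_le'.1 (h l hl l' hl') a ha b hb

theorem Ikle_b (m m' k k' : ℕ) (U : Submodule K F)
    (h : ∀ l ∈ Finset.Icc 1 m, ∀ l' ∈ Finset.Icc 1 m',
      bSpan K (IklS K (⊤ : Submodule K F) l k) (IklS K ⊤ l' k') ≤ U) :
    bSpan K (Ikle K (R := F) m k) (Ikle K (R := F) m' k') ≤ U := by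
  rw [bSpan_le']
  change _ ≤ bL (Ikle K (R := F) m' k') U
  rw [Ikle, sum_le_iff_aux]
  intro l hl a ha
  suffices h' : Ikle K (R := F) m' k' ≤ bL (IklS K (⊤ : Submodule K F) l k) U from
    fun b hb => neg_br (h' hb a ha)
  rw [Ikle, sum_le_iff_aux]
  intro l' hl' b hb a ha
  exact neg_br (bSpan_le'.1 (h l hl l' hl') a ha b hb)

theorem pA' (k k' l l' : ℕ) (hl : 1 ≤ l) (hl' : 1 ≤ l') :
    pSpan K (IklS K (⊤ : Submodule K F) l k) (IklS K ⊤ l' k') ≤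
      IklS K (⊤ : Submodule K F) (l + l') (k + k') := by
  obtain ⟨l, rfl⟩ := Nat.exists_eq_add_of_le' hl
  obtain ⟨l', rfl⟩ := Nat.exists_eq_add_of_le' hl'
  rw [show l + 1 + (l' + 1) = l + l' + 2 by omega]
  exact pA l l' k k'

theorem pB' (k k' l l' : ℕ) (hl : 1 ≤ l) (hl' : 1 ≤ l') :
    bSpan K (IklS K (⊤ : Submodule K F) l k) (IklS K ⊤ l' k') ≤
      bSpan K ⊤ (IklS K (⊤ : Submodule K F) (l + l' - 1) (k + k')) := by
  obtain ⟨l, rfl⟩ := Nat.exists_eq_add_of_le' hl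
  obtain ⟨l', rfl⟩ := Nat.exists_eq_add_of_le' hl'
  rw [show l + 1 + (l' + 1) - 1 = l + l' + 1 by omega]
  exact pB l l' k k'

end helpers

/-- products and commutators of the subspaces `I_k^ℓ(F)`, `I_k^{≤ℓ}(F)`. -/
theorem statement1 {K : Type*} [Field K] [CharZero K]
    {F : Type*} [NonUnitalRing F] [Module K F] [SMulCommClass K F F] [IsScalarTower K F F]
    (k k' ℓ ℓ' : ℕ) (hℓ : 1 ≤ ℓ) (hℓ' : 1 ≤ ℓ') :
    pSpan K (IklS K (⊤ : Submodule K F) ℓ k) (IklS K ⊤ ℓ' k') ≤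
      IklS K (⊤ : Submodule K F) (ℓ + ℓ') (k + k') ∧
    pSpan K (Ikle K (R := F) ℓ k) (Ikle K (R := F) ℓ' k') ≤
      Ikle K (R := F) (ℓ + ℓ') (k + k') ∧
    bSpan K (IklS K (⊤ : Submodule K F) ℓ k) (IklS K ⊤ ℓ' k') ≤
      bSpan K ⊤ (IklS K (⊤ : Submodule K F) (ℓ + ℓ' - 1) (k + k')) ∧
    bSpan K (Ikle K (R := F) ℓ k) (Ikle K (R := F) ℓ' k') ≤
      bSpan K ⊤ (Ikle K (R := F) (ℓ + ℓ' - 1) (k + k')) := by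
  refine ⟨pA' k k' ℓ ℓ' hℓ hℓ', Ikle_p _ _ _ _ _ ?_, pB' k k' ℓ ℓ' hℓ hℓ', Ikle_b _ _ _ _ _ ?_⟩
  · intro l hl l' hl'
    rw [Finset.mem_Icc] at hl hl'
    exact (pA' k k' l l' hl.1 hl'.1).trans (Ikl_le_Ikle (by omega) (by omega))
  · intro l hl l' hl'
    rw [Finset.mem_Icc] at hl hl'
    exact (pB' k k' l l' hl.1 hl'.1).trans (bSpan_mono' (Ikl_le_Ikle (by omega) (by omega)))
end

section
/- Let (g,A) be a compatible pair over a field k of characteristic 0 and F an associative k-algebra such that [F,F] = F (F is perfect as a Lie algebra). Then (g,A)(F) = F ⊗ ⟨g⟩, where ⟨g⟩ = Σ_{n≥1} g^n is the associative subalgebra of A generated by g. -/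
open Submodule TensorProduct

variable (K : Type*) [Field K]

theorem gPow_ad {K : Type*} [Field K] {A : Type*} [Ring A] [Algebra K A]
    (g : Submodule K A) (hg : ∀ x ∈ g, ∀ y ∈ g, x * y - y * x ∈ g) (n : ℕ) :
    ∀ x ∈ g, ∀ y ∈ gPow K g (n + 1), x * y - y * x ∈ gPow K g (n + 1) := by
  induction n with
  | zero => exact hg
  | succ n ih =>
    intro x hx y hy
    change y ∈ pSpan K g (gPow K g (n + 1)) at hy
    change _ ∈ pSpan K g (gPow K g (n + 1))
    unfold pSpan at hy
    induction hy using Submodule.span_induction with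
    | mem y h =>
      obtain ⟨a, ha, b, hb, rfl⟩ := h
      have e : x * (a * b) - a * b * x = (x * a - a * x) * b + a * (x * b - b * x) := by
        noncomm_ring
      rw [e]
      exact Submodule.add_mem _ (Submodule.subset_span ⟨_, hg x hx a ha, b, hb, rfl⟩)
        (Submodule.subset_span ⟨a, ha, _, ih x hx b hb, rfl⟩)
    | zero => simp
    | add u v _ _ hu hv =>
      have e : x * (u + v) - (u + v) * x = (x * u - u * x) + (x * v - v * x) := by
        noncomm_ring
      rw [e]
      exact Submodule.add_mem _ hu hv
    | smul c u _ hu =>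
      have e : x * (c • u) - (c • u) * x = c • (x * u - u * x) := by
        rw [mul_smul_comm, smul_mul_assoc, smul_sub]
      rw [e]
      exact Submodule.smul_mem _ _ hu

theorem gPow_mul {K : Type*} [Field K] {A : Type*} [Ring A] [Algebra K A]
    (g : Submodule K A) (m n : ℕ) :
    ∀ x ∈ gPow K g (m + 1), ∀ y ∈ gPow K g (n + 1), x * y ∈ gPow K g (m + n + 1 + 1) := by
  induction m with
  | zero =>
    intro x hx y hy
    rw [Nat.zero_add]
    exact Submodule.subset_span ⟨x, hx, y, hy, rfl⟩
  | succ m ih =>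
    intro x hx y hy
    rw [show m + 1 + n + 1 + 1 = (m + n + 1) + 2 by omega]
    change x ∈ pSpan K g (gPow K g (m + 1)) at hx
    unfold pSpan at hx
    induction hx using Submodule.span_induction with
    | mem x h =>
      obtain ⟨a, ha, b, hb, rfl⟩ := h
      rw [mul_assoc]
      exact Submodule.subset_span ⟨a, ha, _, ih b hb y hy, rfl⟩
    | zero => simp
    | add u v _ _ hu hv =>
      rw [add_mul]
      exact Submodule.add_mem _ hu hv
    | smul c u _ hu =>
      rw [smul_mul_assoc]
      exact Submodule.smul_mem _ _ hu

theorem gSup_mul {K : Type*} [Field K] {A : Type*} [Ring A] [Algebra K A]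
    (g : Submodule K A) :
    ∀ x ∈ (⨆ n : ℕ, gPow K g (n + 1)), ∀ y ∈ (⨆ n : ℕ, gPow K g (n + 1)),
      x * y ∈ (⨆ n : ℕ, gPow K g (n + 1)) := by
  intro x hx y hy
  induction hx using Submodule.iSup_induction' with
  | mem m x hx =>
    induction hy using Submodule.iSup_induction' with
    | mem n y hy =>
      exact Submodule.mem_iSup_of_mem (p := fun n : ℕ => gPow K g (n + 1)) (m + n + 1)
        (gPow_mul g m n x hx y hy)
    | zero => simp
    | add u v _ _ hu hv => rw [mul_add]; exact Submodule.add_mem _ hu hv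
  | zero => simp
  | add u v _ _ hu hv => rw [add_mul]; exact Submodule.add_mem _ hu hv

theorem tSpan_mul {K : Type*} [Field K]
    {F : Type*} [NonUnitalRing F] [Module K F] [SMulCommClass K F F] [IsScalarTower K F F]
    {A : Type*} [Ring A] [Algebra K A] (B : Submodule K A)
    (hB : ∀ x ∈ B, ∀ y ∈ B, x * y ∈ B) :
    ∀ x ∈ tSpan K (⊤ : Submodule K F) B, ∀ y ∈ tSpan K (⊤ : Submodule K F) B,
      x * y ∈ tSpan K (⊤ : Submodule K F) B := by
  intro x hx y hy
  unfold tSpan at hx hy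
  induction hx using Submodule.span_induction with
  | mem x h =>
    obtain ⟨f, -, a, ha, rfl⟩ := h
    induction hy using Submodule.span_induction with
    | mem y h =>
      obtain ⟨f', -, a', ha', rfl⟩ := h
      rw [Algebra.TensorProduct.tmul_mul_tmul]
      exact Submodule.subset_span ⟨_, trivial, _, hB a ha a' ha', rfl⟩
    | zero => simp
    | add u v _ _ hu hv => rw [mul_add]; exact Submodule.add_mem _ hu hv
    | smul c u _ hu => rw [mul_smul_comm]; exact Submodule.smul_mem _ _ hu
  | zero => simp
  | add u v _ _ hu hv => rw [add_mul]; exact Submodule.add_mem _ hu hv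
  | smul c u _ hu => rw [smul_mul_assoc]; exact Submodule.smul_mem _ _ hu

theorem tmul_mem_of_perfect {K : Type*} [Field K]
    {F : Type*} [NonUnitalRing F] [Module K F] [SMulCommClass K F F] [IsScalarTower K F F]
    {A : Type*} [Ring A] [Algebra K A]
    (g : Submodule K A) (hg : ∀ x ∈ g, ∀ y ∈ g, x * y - y * x ∈ g)
    (hperfect : bSpan K (⊤ : Submodule K F) ⊤ = ⊤)
    (T : Submodule K (F ⊗[K] A)) (h1 : tSpan K (⊤ : Submodule K F) g ≤ T)
    (h2 : ∀ x ∈ T, ∀ y ∈ T, x * y - y * x ∈ T) (n : ℕ) :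
    ∀ f : F, ∀ a ∈ gPow K g (n + 1), f ⊗ₜ[K] a ∈ T := by
  induction n with
  | zero => exact fun f a ha => h1 (Submodule.subset_span ⟨f, trivial, a, ha, rfl⟩)
  | succ n ih =>
    intro f a ha
    change a ∈ pSpan K g (gPow K g (n + 1)) at ha
    unfold pSpan at ha
    induction ha using Submodule.span_induction with
    | mem a h =>
      obtain ⟨x, hx, y, hy, rfl⟩ := h
      have hf : f ∈ bSpan K (⊤ : Submodule K F) ⊤ := by rw [hperfect]; trivial
      unfold bSpan at hf
      induction hf using Submodule.span_induction with
      | mem f h =>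
        obtain ⟨p, -, q, -, rfl⟩ := h
        have hx' : p ⊗ₜ[K] x ∈ T := h1 (Submodule.subset_span ⟨p, trivial, x, hx, rfl⟩)
        have h3 := h2 _ hx' _ (ih q y hy)
        have h4 := ih (q * p) _ (gPow_ad g hg n x hx y hy)
        have e : (p * q - q * p) ⊗ₜ[K] (x * y) =
            (p ⊗ₜ[K] x * q ⊗ₜ[K] y - q ⊗ₜ[K] y * p ⊗ₜ[K] x)
              - (q * p) ⊗ₜ[K] (x * y - y * x) := by
          rw [Algebra.TensorProduct.tmul_mul_tmul, Algebra.TensorProduct.tmul_mul_tmul,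
            TensorProduct.sub_tmul, TensorProduct.tmul_sub]
          abel
        rw [e]
        exact Submodule.sub_mem _ h3 h4
      | zero => simp
      | add u v _ _ hu hv => rw [TensorProduct.add_tmul]; exact Submodule.add_mem _ hu hv
      | smul c u _ hu =>
        rw [← TensorProduct.smul_tmul']; exact Submodule.smul_mem _ _ hu
    | zero => simp
    | add u v _ _ hu hv => rw [TensorProduct.tmul_add]; exact Submodule.add_mem _ hu hv
    | smul c u _ hu => rw [TensorProduct.tmul_smul]; exact Submodule.smul_mem _ _ hu

/-- if `[F,F] = F`, then `(g,A)(F) = F ⊗ ⟨g⟩` where `⟨g⟩ = Σ_{n ≥ 1} g^n`. -/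
theorem statement5 {K : Type*} [Field K] [CharZero K]
    {F : Type*} [NonUnitalRing F] [Module K F] [SMulCommClass K F F] [IsScalarTower K F F]
    {A : Type*} [Ring A] [Algebra K A]
    (g : Submodule K A) (hg : ∀ x ∈ g, ∀ y ∈ g, x * y - y * x ∈ g)
    (hperfect : bSpan K (⊤ : Submodule K F) ⊤ = ⊤) :
    currentLie K (F := F) g = tSpan K (⊤ : Submodule K F) (⨆ n : ℕ, gPow K g (n + 1)) := by
  apply le_antisymm
  · refine sInf_le ⟨?_, ?_⟩
    · refine Submodule.span_mono ?_
      rintro z ⟨f, hf, a, ha, rfl⟩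
      exact ⟨f, hf, a,
        Submodule.mem_iSup_of_mem (p := fun n : ℕ => gPow K g (n + 1)) 0 ha, rfl⟩
    · intro x hx y hy
      exact Submodule.sub_mem _ (tSpan_mul _ (gSup_mul g) x hx y hy)
        (tSpan_mul _ (gSup_mul g) y hy x hx)
  · refine le_sInf ?_
    rintro T ⟨h1, h2⟩
    refine Submodule.span_le.2 ?_
    rintro z ⟨f, -, a, ha, rfl⟩
    change f ⊗ₜ[K] a ∈ T
    induction ha using Submodule.iSup_induction' with
    | mem n a ha => exact tmul_mem_of_perfect g hg hperfect T h1 h2 n f a ha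
    | zero => simp
    | add u v _ _ hu hv => rw [TensorProduct.tmul_add]; exact Submodule.add_mem _ hu hv
end
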